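/- Let f : ℝ → 𝓢'(ℝⁿ) be continuous for the weak* topology and bounded in the sense that sup_{t∈ℝ} |⟨f(t), φ⟩| < ∞ for every φ ∈ 𝓢(ℝⁿ). Then for every ψ ∈ 𝓢(ℝⁿ×ℝ) the function t ↦ ⟨f(t), ψ(·,t)⟩ is continuous and integrable on ℝ, the functional Λ_f : ψ ↦ ∫_ℝ ⟨f(t), ψ(·,t)⟩ dt is a tempered distribution on ℝⁿ×ℝ ≅ ℝ^{n+1} (in particular there exist c ≥ 0 and M ∈ ℕ with |⟨Λ_f, ψ⟩| ≤ c·p_{M+2}(ψ) for all ψ), and the linear map f ↦ Λ_f is injective on such maps f. -/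

import Mathlib

open MeasureTheory Filter Topology

noncomputable section

/-- The Schwartz seminorm `p_M`, controlling all derivatives of order `≤ M`
with polynomial weights of order `≤ M`. -/
def pM {E : Type*} [NormedAddCommGroup E] [NormedSpace ℝ E]
    (M : ℕ) (φ : SchwartzMap E ℝ) : ℝ :=
  ((Finset.range (M+1) ×ˢ Finset.range (M+1)).sup
    fun kn => SchwartzMap.seminorm ℝ kn.1 kn.2) φ

/- By Banach–Steinhaus on the Schwartz space, which is complete and hence barrelled, a pointwise
bounded family `f t` is equicontinuous and bounded by a single seminorm of some order `M`. Since
`‖t‖ ≤ ‖(x, t)‖`, weights of order `M + l` on `ψ` bound the order `M` seminorm of `ψ(·, t)` by a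
multiple of `(1 + ‖t‖)⁻ˡ`, which is integrable once `l` exceeds the dimension of the `t`-space.
Testing against the tensor products `χ t • φ x` recovers `t ↦ f t φ`, whence injectivity. -/

open scoped ContDiff SchwartzMap Uniformity

section Cauchy

variable {𝕜 V : Type*} [NormedField 𝕜] [AddCommGroup V] [Module 𝕜 V] [UniformSpace V]
  [IsUniformAddGroup V]

theorem eventually_seminorm_sub_lt_of_cauchySeq {p : Seminorm 𝕜 V} (hp : Continuous p)
    {u : ℕ → V} (hu : CauchySeq u) {ε : ℝ} (hε : 0 < ε) :
    ∃ N, ∀ i ≥ N, ∀ j ≥ N, p (u i - u j) < ε := by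
  have hsub : Tendsto (fun ij : ℕ × ℕ => u ij.2 - u ij.1) atTop (𝓝 0) := by
    have hunif := cauchySeq_iff_tendsto.1 hu
    rwa [uniformity_eq_comap_nhds_zero, tendsto_comap_iff] at hunif
  have hpsub : Tendsto (fun ij : ℕ × ℕ => p (u ij.2 - u ij.1)) atTop (𝓝 0) :=
    map_zero p ▸ (hp.tendsto 0).comp hsub
  obtain ⟨N, hN⟩ := eventually_atTop_prod_self.1 (hpsub.eventually_lt_const hε)
  exact ⟨N, fun i hi j hj => hN j i hj hi⟩

theorem exists_seminorm_le_of_cauchySeq {p : Seminorm 𝕜 V} (hp : Continuous p)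
    {u : ℕ → V} (hu : CauchySeq u) : ∃ C, ∀ i, p (u i) ≤ C := by
  have hcauchy : CauchySeq (p ∘ u) :=
    (Seminorm.uniformContinuous_of_continuousAt_zero hp.continuousAt).comp_cauchySeq hu
  obtain ⟨a, ha⟩ := cauchySeq_tendsto_of_complete hcauchy
  obtain ⟨C, hC⟩ := ha.bddAbove_range
  exact ⟨C, fun i => hC ⟨i, rfl⟩⟩

end Cauchy

section UniformLimits

variable {𝕜 E F : Type*} [NontriviallyNormedField 𝕜] [IsRCLikeNormedField 𝕜]
  [NormedAddCommGroup E] [NormedSpace 𝕜 E]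
  [NormedAddCommGroup F] [NormedSpace 𝕜 F]

theorem hasFTaylorSeriesUpTo_of_tendstoLocallyUniformly {ι : Type*} {l : Filter ι} [NeBot l]
    {n : ℕ∞ω} {f : ι → E → F} {p : ι → E → FormalMultilinearSeries 𝕜 E F}
    {q : E → FormalMultilinearSeries 𝕜 E F} (hf : ∀ i, HasFTaylorSeriesUpTo n (f i) (p i))
    (hq : ∀ m : ℕ, m ≤ n → TendstoLocallyUniformly (fun i x => p i x m) (fun x => q x m) l) :
    HasFTaylorSeriesUpTo n (fun x => (q x 0).curry0) q := by
  refine ⟨fun _ => rfl, fun m hm x => ?_, fun m hm => ?_⟩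
  · let curry := continuousMultilinearCurryLeftEquiv 𝕜 (fun _ : Fin (m + 1) => E) F
    have hderiv := curry.isometry.uniformContinuous.comp_tendstoLocallyUniformly
      (hq (m + 1) (mod_cast ENat.add_one_natCast_le_withTop_of_lt hm))
    exact hasFDerivAt_of_tendstoLocallyUniformlyOn isOpen_univ hderiv.tendstoLocallyUniformlyOn
      (fun i y _ => (hf i).fderiv m hm y)
      (fun y _ => (hq m hm.le).tendstoLocallyUniformlyOn.tendsto_at (Set.mem_univ y))
      (Set.mem_univ x)
  · exact (hq m hm).continuous (Frequently.of_forall fun i => (hf i).cont m hm)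

end UniformLimits

section EquicontinuousFamilies

theorem continuous_apply_of_equicontinuous {X Y α : Type*} [TopologicalSpace X]
    [TopologicalSpace Y] [UniformSpace α] {F : X → Y → α} (hF : Equicontinuous F)
    (hFc : ∀ y, Continuous fun x => F x y) {φ : X → Y} (hφ : Continuous φ) :
    Continuous fun x => F x (φ x) := by
  refine continuous_iff_continuousAt.2 fun x₀ => Uniform.tendsto_nhds_right.2 ?_
  have hfixed : Tendsto (fun x => (F x₀ (φ x₀), F x (φ x₀))) (𝓝 x₀) (𝓤 α) :=
    Uniform.tendsto_nhds_right.1 ((hFc (φ x₀)).tendsto x₀)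
  have hmoving : Tendsto (fun x => (F x (φ x₀), F x (φ x))) (𝓝 x₀) (𝓤 α) := fun U hU =>
    (hφ.tendsto x₀ |>.eventually (hF (φ x₀) U hU)).mono fun x hx => hx x
  exact hfixed.uniformity_trans hmoving

theorem exists_forall_norm_le_sup_of_pointwise_bounded {ι κ 𝕜 V G : Type*}
    [NontriviallyNormedField 𝕜]
    [AddCommGroup V] [Module 𝕜 V] [TopologicalSpace V] [BarrelledSpace 𝕜 V]
    [SeminormedAddCommGroup G] [NormedSpace 𝕜 G] {p : SeminormFamily 𝕜 V κ}
    (hp : WithSeminorms p) {f : ι → V →L[𝕜] G} (hf : ∀ v, ∃ C, ∀ i, ‖f i v‖ ≤ C) :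
    ∃ (s : Finset κ) (C : ℝ), 0 ≤ C ∧ ∀ i v, ‖f i v‖ ≤ C * s.sup p v := by
  let q (i : ι) : Seminorm 𝕜 V := (normSeminorm 𝕜 G).comp (f i).toLinearMap
  have hbdd : BddAbove (Set.range q) := by
    refine Seminorm.bddAbove_range_iff.2 fun v => ?_
    obtain ⟨C, hC⟩ := hf v
    exact ⟨C, Set.forall_mem_range.2 hC⟩
  have hcont : Continuous (⨆ i, q i : Seminorm 𝕜 V) := by
    rw [Seminorm.coe_iSup_eq hbdd]
    exact Seminorm.continuous_iSup q (fun i => (f i).continuous.norm) hbdd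
  obtain ⟨s, C, -, hC⟩ := Seminorm.bound_of_continuous hp _ hcont
  exact ⟨s, C, C.2, fun i v => (le_ciSup hbdd i v).trans (hC v)⟩

theorem continuous_apply_of_pointwise_bounded {X 𝕜 V G : Type*} [TopologicalSpace X]
    [NontriviallyNormedField 𝕜] [AddCommGroup V] [Module 𝕜 V] [UniformSpace V] [IsUniformAddGroup V]
    [ContinuousSMul 𝕜 V] [BarrelledSpace 𝕜 V] [SeminormedAddCommGroup G] [NormedSpace 𝕜 G]
    {f : X → V →L[𝕜] G} (hfc : ∀ v, Continuous fun x => f x v) (hf : ∀ v, ∃ C, ∀ x, ‖f x v‖ ≤ C)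
    {φ : X → V} (hφ : Continuous φ) : Continuous fun x => f x (φ x) := by
  have hequi : UniformEquicontinuous fun x => ⇑(f x) :=
    (norm_withSeminorms 𝕜 G).banach_steinhaus fun _ v =>
      (hf v).imp fun C hC => Set.forall_mem_range.2 hC
  exact continuous_apply_of_equicontinuous hequi.equicontinuous hfc hφ

end EquicontinuousFamilies

section SchwartzComplete

variable {E F : Type*} [NormedAddCommGroup E] [NormedSpace ℝ E]
  [NormedAddCommGroup F] [NormedSpace ℝ F]

theorem iteratedFDeriv_schwartzMap_sub (φ ψ : 𝓢(E, F)) (m : ℕ) (x : E) :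
    iteratedFDeriv ℝ m (φ - ψ : 𝓢(E, F)) x = iteratedFDeriv ℝ m φ x - iteratedFDeriv ℝ m ψ x :=
  iteratedFDeriv_sub_apply (φ.contDiffAt m) (ψ.contDiffAt m)

theorem exists_schwartzMap_of_tendstoLocallyUniformly {ι : Type*} {l : Filter ι} [NeBot l]
    {u : ι → 𝓢(E, F)} {q : E → FormalMultilinearSeries ℝ E F}
    (hq : ∀ m, TendstoLocallyUniformly (fun i x => iteratedFDeriv ℝ m (u i) x)
      (fun x => q x m) l)
    (hu : ∀ k m, ∃ C, ∀ i, SchwartzMap.seminorm ℝ k m (u i) ≤ C) :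
    ∃ φ : 𝓢(E, F), ∀ m x, iteratedFDeriv ℝ m φ x = q x m := by
  have htaylor : HasFTaylorSeriesUpTo ∞ (fun x => (q x 0).curry0) q :=
    hasFTaylorSeriesUpTo_of_tendstoLocallyUniformly
      (fun i => ((u i).smooth ⊤).ftaylorSeries) fun m _ => hq m
  have hderiv (m : ℕ) (x : E) : iteratedFDeriv ℝ m (fun x => (q x 0).curry0) x = q x m :=
    (htaylor.eq_iteratedFDeriv (mod_cast le_top) x).symm
  refine ⟨⟨fun x => (q x 0).curry0, htaylor.contDiff, fun k m => ?_⟩, hderiv⟩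
  obtain ⟨C, hC⟩ := hu k m
  refine ⟨C, fun x => ?_⟩
  rw [hderiv]
  have hlim : Tendsto (fun i => iteratedFDeriv ℝ m (u i) x) l (𝓝 (q x m)) :=
    (hq m).tendstoLocallyUniformlyOn.tendsto_at (Set.mem_univ x)
  exact le_of_tendsto' (hlim.norm.const_mul _)
    fun i => ((u i).le_seminorm ℝ k m x).trans (hC i)

theorem tendsto_schwartzMap_of_cauchySeq {u : ℕ → 𝓢(E, F)} (hu : CauchySeq u) {φ : 𝓢(E, F)}
    (hφ : ∀ m x, Tendsto (fun i => iteratedFDeriv ℝ m (u i) x) atTop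
      (𝓝 (iteratedFDeriv ℝ m φ x))) :
    Tendsto u atTop (𝓝 φ) := by
  refine ((schwartz_withSeminorms ℝ E F).tendsto_nhds_atTop u φ).2 fun ⟨k, m⟩ ε hε => ?_
  obtain ⟨N, hN⟩ := eventually_seminorm_sub_lt_of_cauchySeq
    ((schwartz_withSeminorms ℝ E F).continuous_seminorm (k, m)) hu (half_pos hε)
  refine ⟨N, fun i hi => lt_of_le_of_lt ?_ (half_lt_self hε)⟩
  refine SchwartzMap.seminorm_le_bound ℝ k m _ (half_pos hε).le fun x => ?_
  rw [iteratedFDeriv_schwartzMap_sub]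
  refine le_of_tendsto (((hφ m x).const_sub _).norm.const_mul _) ?_
  filter_upwards [eventually_ge_atTop N] with j hj
  rw [← iteratedFDeriv_schwartzMap_sub]
  exact (SchwartzMap.le_seminorm ℝ k m _ x).trans (hN i hi j hj).le

theorem uniformCauchySeqOn_iteratedFDeriv_of_cauchySeq {u : ℕ → 𝓢(E, F)} (hu : CauchySeq u)
    (m : ℕ) : UniformCauchySeqOn (fun i x => iteratedFDeriv ℝ m (u i) x) atTop Set.univ := by
  refine Metric.uniformCauchySeqOn_iff.2 fun ε hε => ?_
  obtain ⟨N, hN⟩ := eventually_seminorm_sub_lt_of_cauchySeq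
    ((schwartz_withSeminorms ℝ E F).continuous_seminorm (0, m)) hu hε
  refine ⟨N, fun i hi j hj x _ => ?_⟩
  rw [dist_eq_norm, ← iteratedFDeriv_schwartzMap_sub]
  exact (SchwartzMap.norm_iteratedFDeriv_le_seminorm ℝ _ m x).trans_lt (hN i hi j hj)

instance instIsCountablyGeneratedUniformitySchwartzMap : (𝓤 𝓢(E, F)).IsCountablyGenerated :=
  IsUniformAddGroup.uniformity_countably_generated

instance instCompleteSpaceSchwartzMap [CompleteSpace F] : CompleteSpace 𝓢(E, F) := by
  refine UniformSpace.complete_of_cauchySeq_tendsto fun u hu => ?_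
  have hcauchy (m : ℕ) := uniformCauchySeqOn_iteratedFDeriv_of_cauchySeq hu m
  choose q hq using fun (x : E) (m : ℕ) =>
    cauchySeq_tendsto_of_complete ((hcauchy m).cauchySeq (Set.mem_univ x))
  have hunif (m : ℕ) : TendstoUniformly (fun i x => iteratedFDeriv ℝ m (u i) x)
      (fun x => q x m) atTop :=
    tendstoUniformlyOn_univ.1 ((hcauchy m).tendstoUniformlyOn_of_tendsto fun x _ => hq x m)
  obtain ⟨φ, hφ⟩ := exists_schwartzMap_of_tendstoLocallyUniformly
    (fun m => (hunif m).tendstoLocallyUniformly) fun k m => exists_seminorm_le_of_cauchySeq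
      ((schwartz_withSeminorms ℝ E F).continuous_seminorm (k, m)) hu
  exact ⟨φ, tendsto_schwartzMap_of_cauchySeq hu fun m x => (hφ m x).symm ▸ hq x m⟩

end SchwartzComplete

section OrderSeminorm

variable {E F : Type*} [NormedAddCommGroup E] [NormedSpace ℝ E]
  [NormedAddCommGroup F] [NormedSpace ℝ F]

/-- The seminorm `pM` for Schwartz functions with values in a normed space `F`: the supremum of
the Schwartz seminorms with at most `M` derivatives and polynomial weight of order at most `M`.
The weights `‖x‖ ^ k`, `k ≤ M`, stand for the single weight `(1 + ‖x‖) ^ M`. -/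
def schwartzOrderSeminorm (M : ℕ) : Seminorm ℝ 𝓢(E, F) :=
  (Finset.Iic (M, M)).sup (schwartzSeminormFamily ℝ E F)

theorem pM_eq_schwartzOrderSeminorm (M : ℕ) (φ : 𝓢(E, ℝ)) :
    pM M φ = schwartzOrderSeminorm M φ := by
  have hindex : Finset.range (M + 1) ×ˢ Finset.range (M + 1) = Finset.Iic (M, M) := by
    ext ⟨k, m⟩
    simp only [Finset.mem_product, Finset.mem_range, Nat.lt_succ_iff, Finset.mem_Iic,
      Prod.mk_le_mk]
  rw [pM, hindex]
  rfl

theorem one_add_norm_pow_mul_le_schwartzOrderSeminorm {M k m : ℕ} (hk : k ≤ M) (hm : m ≤ M)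
    (φ : 𝓢(E, F)) (x : E) :
    (1 + ‖x‖) ^ k * ‖iteratedFDeriv ℝ m φ x‖ ≤ 2 ^ M * schwartzOrderSeminorm M φ :=
  SchwartzMap.one_add_le_sup_seminorm_apply (m := (M, M)) hk hm φ x

theorem schwartzOrderSeminorm_le_bound {M : ℕ} {φ : 𝓢(E, F)} {a : ℝ} (ha : 0 ≤ a)
    (h : ∀ k ≤ M, ∀ m ≤ M, ∀ x, ‖x‖ ^ k * ‖iteratedFDeriv ℝ m φ x‖ ≤ a) :
    schwartzOrderSeminorm M φ ≤ a := by
  refine Seminorm.finset_sup_apply_le ha fun km hkm => ?_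
  have hle := Finset.mem_Iic.1 hkm
  exact SchwartzMap.seminorm_le_bound ℝ _ _ φ ha (h _ hle.1 _ hle.2)

theorem exists_sup_schwartzSeminormFamily_le (s : Finset (ℕ × ℕ)) :
    ∃ M, s.sup (schwartzSeminormFamily ℝ E F) ≤ schwartzOrderSeminorm M := by
  refine ⟨s.sup fun km => max km.1 km.2, Finset.sup_mono fun km hkm => Finset.mem_Iic.2 ?_⟩
  exact max_le_iff.1 (Finset.le_sup (f := fun km : ℕ × ℕ => max km.1 km.2) hkm)

theorem exists_forall_norm_le_schwartzOrderSeminorm [CompleteSpace F] {ι G : Type*}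
    [SeminormedAddCommGroup G] [NormedSpace ℝ G] {f : ι → 𝓢(E, F) →L[ℝ] G}
    (hf : ∀ φ, ∃ C, ∀ i, ‖f i φ‖ ≤ C) :
    ∃ (C : ℝ) (M : ℕ), 0 ≤ C ∧ ∀ i φ, ‖f i φ‖ ≤ C * schwartzOrderSeminorm M φ := by
  obtain ⟨s, C, hC0, hC⟩ :=
    exists_forall_norm_le_sup_of_pointwise_bounded (schwartz_withSeminorms ℝ E F) hf
  obtain ⟨M, hM⟩ := exists_sup_schwartzSeminormFamily_le (E := E) (F := F) s
  exact ⟨C, M, hC0, fun i φ => (hC i φ).trans (mul_le_mul_of_nonneg_left (hM φ) hC0)⟩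

end OrderSeminorm

section Slice

variable {E D F : Type*} [NormedAddCommGroup E] [NormedSpace ℝ E]
  [NormedAddCommGroup D] [NormedSpace ℝ D] [NormedAddCommGroup F] [NormedSpace ℝ F]

/-- The slice `ψ(·, t)` of a Schwartz function `ψ` on a product space, as a Schwartz function of
the first variable. -/
def schwartzSlice (ψ : 𝓢(E × D, F)) (t : D) : 𝓢(E, F) :=
  SchwartzMap.compCLMOfAntilipschitz ℝ (g := fun x : E => (x, t)) (K := 1)
    (by
      convert (ContinuousLinearMap.inl ℝ E D).hasTemperateGrowth.add (.const ((0 : E), t)) using 1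
      ext x <;> simp)
    (AntilipschitzWith.of_le_mul_dist fun x y => by simp [Prod.dist_eq]) ψ

@[simp]
theorem schwartzSlice_apply (ψ : 𝓢(E × D, F)) (t : D) (x : E) : schwartzSlice ψ t x = ψ (x, t) :=
  rfl

theorem forall_apply_eq_iff_eq_schwartzSlice {ψ : 𝓢(E × D, F)} {φ : D → 𝓢(E, F)} :
    (∀ t x, φ t x = ψ (x, t)) ↔ φ = schwartzSlice ψ := by
  simp only [funext_iff, SchwartzMap.ext_iff, schwartzSlice_apply]

theorem norm_compContinuousLinearMap_le_of_norm_le_one {m : ℕ} (A : E [×m]→L[ℝ] F)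
    {L : D →L[ℝ] E} (hL : ‖L‖ ≤ 1) : ‖A.compContinuousLinearMap fun _ => L‖ ≤ ‖A‖ :=
  (A.norm_compContinuousLinearMap_le _).trans <| mul_le_of_le_one_right (norm_nonneg _) <|
    Finset.prod_le_one (fun _ _ => norm_nonneg _) fun _ _ => hL

theorem iteratedFDeriv_schwartzSlice (ψ : 𝓢(E × D, F)) (t : D) (m : ℕ) (x : E) :
    iteratedFDeriv ℝ m (schwartzSlice ψ t) x =
      (iteratedFDeriv ℝ m ψ (x, t)).compContinuousLinearMap
        fun _ => ContinuousLinearMap.inl ℝ E D := by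
  have hcomp : (schwartzSlice ψ t : E → F) =
      (fun z => ψ (z + (0, t))) ∘ ContinuousLinearMap.inl ℝ E D := by
    ext y
    simp
  have hsmooth : ContDiff ℝ m fun z => ψ (z + (0, t)) :=
    (ψ.smooth m).comp (contDiff_id.add contDiff_const)
  rw [hcomp, ContinuousLinearMap.iteratedFDeriv_comp_right _ hsmooth x le_rfl,
    iteratedFDeriv_comp_add_right]
  simp

theorem norm_iteratedFDeriv_schwartzSlice_le (ψ : 𝓢(E × D, F)) (t : D) (m : ℕ) (x : E) :
    ‖iteratedFDeriv ℝ m (schwartzSlice ψ t) x‖ ≤ ‖iteratedFDeriv ℝ m ψ (x, t)‖ := by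
  rw [iteratedFDeriv_schwartzSlice]
  exact norm_compContinuousLinearMap_le_of_norm_le_one _ (ContinuousLinearMap.norm_inl_le_one ℝ E D)

theorem norm_iteratedFDeriv_schwartzSlice_sub_le (ψ : 𝓢(E × D, F)) (s t : D) (m : ℕ) (x : E) :
    ‖iteratedFDeriv ℝ m (schwartzSlice ψ t - schwartzSlice ψ s : 𝓢(E, F)) x‖ ≤
      ‖iteratedFDeriv ℝ m ψ (x, t) - iteratedFDeriv ℝ m ψ (x, s)‖ := by
  rw [iteratedFDeriv_schwartzMap_sub, iteratedFDeriv_schwartzSlice, iteratedFDeriv_schwartzSlice]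
  exact norm_compContinuousLinearMap_le_of_norm_le_one
    (iteratedFDeriv ℝ m ψ (x, t) - iteratedFDeriv ℝ m ψ (x, s))
    (ContinuousLinearMap.norm_inl_le_one ℝ E D)

theorem schwartzOrderSeminorm_schwartzSlice_le (M l : ℕ) (ψ : 𝓢(E × D, F)) (t : D) :
    schwartzOrderSeminorm M (schwartzSlice ψ t) ≤
      2 ^ (M + l) * schwartzOrderSeminorm (M + l) ψ * ((1 + ‖t‖) ^ l)⁻¹ := by
  refine schwartzOrderSeminorm_le_bound (by positivity) fun k hk m hm x => ?_
  rw [le_mul_inv_iff₀ (by positivity)]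
  have hx : ‖x‖ ≤ 1 + ‖(x, t)‖ := (norm_fst_le (x, t)).trans (le_add_of_nonneg_left zero_le_one)
  calc ‖x‖ ^ k * ‖iteratedFDeriv ℝ m (schwartzSlice ψ t) x‖ * (1 + ‖t‖) ^ l
      ≤ (1 + ‖(x, t)‖) ^ k * ‖iteratedFDeriv ℝ m ψ (x, t)‖ * (1 + ‖(x, t)‖) ^ l := by
        gcongr
        · exact norm_iteratedFDeriv_schwartzSlice_le ψ t m x
        · exact norm_snd_le (x, t)
    _ = (1 + ‖(x, t)‖) ^ (k + l) * ‖iteratedFDeriv ℝ m ψ (x, t)‖ := by ring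
    _ ≤ 2 ^ (M + l) * schwartzOrderSeminorm (M + l) ψ :=
        one_add_norm_pow_mul_le_schwartzOrderSeminorm (by omega) (by omega) ψ (x, t)

theorem norm_apply_schwartzSlice_le {G : Type*} [SeminormedAddCommGroup G] [NormedSpace ℝ G]
    {f : D → 𝓢(E, F) →L[ℝ] G} {C : ℝ} {M : ℕ} (hC0 : 0 ≤ C)
    (hC : ∀ t φ, ‖f t φ‖ ≤ C * schwartzOrderSeminorm M φ) (l : ℕ) (ψ : 𝓢(E × D, F)) (t : D) :
    ‖f t (schwartzSlice ψ t)‖ ≤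
      C * (2 ^ (M + l) * schwartzOrderSeminorm (M + l) ψ) * ((1 + ‖t‖) ^ l)⁻¹ := by
  rw [mul_assoc]
  exact (hC t _).trans
    (mul_le_mul_of_nonneg_left (schwartzOrderSeminorm_schwartzSlice_le M l ψ t) hC0)

theorem norm_pow_mul_norm_iteratedFDeriv_sub_le (ψ : 𝓢(E × D, F)) (k m : ℕ) (x : E) (s t : D) :
    ‖x‖ ^ k * ‖iteratedFDeriv ℝ m ψ (x, t) - iteratedFDeriv ℝ m ψ (x, s)‖ ≤
      SchwartzMap.seminorm ℝ k (m + 1) ψ * ‖t - s‖ := by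
  have hdiff : Differentiable ℝ (iteratedFDeriv ℝ m ψ) :=
    (ψ.smooth (m + 1 : ℕ)).differentiable_iteratedFDeriv (mod_cast m.lt_succ_self)
  have hderiv (r : D) : HasFDerivAt (fun r => ‖x‖ ^ k • iteratedFDeriv ℝ m ψ (x, r))
      (‖x‖ ^ k • (fderiv ℝ (iteratedFDeriv ℝ m ψ) (x, r)).comp (.inr ℝ E D)) r :=
    ((hdiff (x, r)).hasFDerivAt.comp r (hasFDerivAt_prodMk_right x r)).const_smul (‖x‖ ^ k)
  have hbound (r : D) :
      ‖‖x‖ ^ k • (fderiv ℝ (iteratedFDeriv ℝ m ψ) (x, r)).comp (.inr ℝ E D)‖ ≤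
        SchwartzMap.seminorm ℝ k (m + 1) ψ := by
    refine (ContinuousLinearMap.opNorm_smul_le _ _).trans ?_
    rw [norm_pow, norm_norm]
    calc ‖x‖ ^ k * ‖(fderiv ℝ (iteratedFDeriv ℝ m ψ) (x, r)).comp (.inr ℝ E D)‖
        ≤ ‖(x, r)‖ ^ k * ‖fderiv ℝ (iteratedFDeriv ℝ m ψ) (x, r)‖ := by
          gcongr
          · exact norm_fst_le (x, r)
          · exact (ContinuousLinearMap.opNorm_comp_le _ _).trans <|
              mul_le_of_le_one_right (norm_nonneg _) (ContinuousLinearMap.norm_inr_le_one ℝ E D)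
      _ ≤ SchwartzMap.seminorm ℝ k (m + 1) ψ := by
          rw [norm_fderiv_iteratedFDeriv]
          exact ψ.le_seminorm ℝ k (m + 1) (x, r)
  have hmean := convex_univ.norm_image_sub_le_of_norm_hasFDerivWithin_le
    (fun r _ => (hderiv r).hasFDerivWithinAt) (fun r _ => hbound r) (Set.mem_univ s)
    (Set.mem_univ t)
  rwa [← smul_sub, norm_smul, norm_pow, norm_norm] at hmean

theorem seminorm_schwartzSlice_sub_le (ψ : 𝓢(E × D, F)) (k m : ℕ) (s t : D) :
    SchwartzMap.seminorm ℝ k m (schwartzSlice ψ t - schwartzSlice ψ s) ≤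
      SchwartzMap.seminorm ℝ k (m + 1) ψ * ‖t - s‖ :=
  SchwartzMap.seminorm_le_bound ℝ k m _ (by positivity) fun x =>
    (mul_le_mul_of_nonneg_left (norm_iteratedFDeriv_schwartzSlice_sub_le ψ s t m x)
      (by positivity)).trans (norm_pow_mul_norm_iteratedFDeriv_sub_le ψ k m x s t)

theorem continuous_schwartzSlice (ψ : 𝓢(E × D, F)) : Continuous (schwartzSlice ψ) := by
  refine continuous_iff_continuousAt.2 fun s => ?_
  refine ((schwartz_withSeminorms ℝ E F).tendsto_nhds _ _).2 fun ⟨k, m⟩ ε hε => ?_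
  have hlim : Tendsto (fun t => SchwartzMap.seminorm ℝ k (m + 1) ψ * ‖t - s‖) (𝓝 s) (𝓝 0) := by
    simpa using (tendsto_norm_sub_self s).const_mul (SchwartzMap.seminorm ℝ k (m + 1) ψ)
  filter_upwards [hlim.eventually_lt_const hε] with t ht
  exact (seminorm_schwartzSlice_sub_le ψ k m s t).trans_lt ht

end Slice

section Tensor

variable {E D F : Type*} [NormedAddCommGroup E] [NormedSpace ℝ E]
  [NormedAddCommGroup D] [NormedSpace ℝ D] [NormedAddCommGroup F] [NormedSpace ℝ F]

theorem one_add_norm_pow_mul_norm_iteratedFDeriv_comp_le {L : D →L[ℝ] E} (hL : ‖L‖ ≤ 1)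
    (φ : 𝓢(E, F)) {M k m : ℕ} (hk : k ≤ M) (hm : m ≤ M) (z : D) :
    (1 + ‖L z‖) ^ k * ‖iteratedFDeriv ℝ m (fun z => φ (L z)) z‖ ≤
      2 ^ M * schwartzOrderSeminorm M φ := by
  have hcomp : ‖iteratedFDeriv ℝ m (φ ∘ L) z‖ ≤ ‖iteratedFDeriv ℝ m φ (L z)‖ := by
    rw [L.iteratedFDeriv_comp_right (φ.smooth m) z le_rfl]
    exact norm_compContinuousLinearMap_le_of_norm_le_one _ hL
  exact (mul_le_mul_of_nonneg_left hcomp (by positivity)).trans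
    (one_add_norm_pow_mul_le_schwartzOrderSeminorm hk hm φ (L z))

theorem exists_norm_pow_mul_norm_iteratedFDeriv_tensor_le (φ : 𝓢(E, F)) (χ : 𝓢(D, ℝ)) (k m : ℕ) :
    ∃ C, ∀ z : E × D, ‖z‖ ^ k * ‖iteratedFDeriv ℝ m (fun z : E × D => χ z.2 • φ z.1) z‖ ≤ C := by
  let M := max k m
  let B := 2 ^ M * schwartzOrderSeminorm M χ
  let A := 2 ^ M * schwartzOrderSeminorm M φ
  refine ⟨∑ i ∈ Finset.range (m + 1), (m.choose i : ℝ) * (B * A), fun z => ?_⟩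
  have hleibniz := norm_iteratedFDeriv_smul_le ((χ.smooth ⊤).comp contDiff_snd)
    ((φ.smooth ⊤).comp contDiff_fst) z (n := m) (mod_cast le_top)
  refine (mul_le_mul_of_nonneg_left hleibniz (by positivity)).trans ?_
  rw [Finset.mul_sum]
  refine Finset.sum_le_sum fun i hi => ?_
  have hi' : i ≤ m := Nat.lt_succ_iff.1 (Finset.mem_range.1 hi)
  have hχ := one_add_norm_pow_mul_norm_iteratedFDeriv_comp_le
    (ContinuousLinearMap.norm_snd_le ℝ E D) χ (le_max_left k m) (hi'.trans (le_max_right k m)) z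
  have hφ := one_add_norm_pow_mul_norm_iteratedFDeriv_comp_le
    (ContinuousLinearMap.norm_fst_le ℝ E D) φ (le_max_left k m)
    ((Nat.sub_le m i).trans (le_max_right k m)) z
  have hz : ‖z‖ ≤ (1 + ‖z.2‖) * (1 + ‖z.1‖) := by
    refine max_le ?_ ?_ <;> nlinarith [norm_nonneg z.1, norm_nonneg z.2]
  calc _ ≤ ((1 + ‖z.2‖) * (1 + ‖z.1‖)) ^ k * ((m.choose i : ℝ)
          * ‖iteratedFDeriv ℝ i (fun z : E × D => χ z.2) z‖
          * ‖iteratedFDeriv ℝ (m - i) (fun z : E × D => φ z.1) z‖) := by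
        gcongr
        · exact le_rfl
        · exact le_rfl
    _ = (m.choose i : ℝ) *
          (((1 + ‖z.2‖) ^ k * ‖iteratedFDeriv ℝ i (fun z : E × D => χ z.2) z‖)
          * ((1 + ‖z.1‖) ^ k * ‖iteratedFDeriv ℝ (m - i) (fun z : E × D => φ z.1) z‖)) := by
        rw [mul_pow]
        ring
    _ ≤ (m.choose i : ℝ) * (B * A) := by
        gcongr
        · exact hχ
        · exact hφ

/-- The tensor product `(x, t) ↦ χ t • φ x` of a vector-valued and a scalar Schwartz function. -/
def schwartzTensor (φ : 𝓢(E, F)) (χ : 𝓢(D, ℝ)) : 𝓢(E × D, F) where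
  toFun z := χ z.2 • φ z.1
  smooth' := ((χ.smooth ⊤).comp contDiff_snd).smul ((φ.smooth ⊤).comp contDiff_fst)
  decay' := exists_norm_pow_mul_norm_iteratedFDeriv_tensor_le φ χ

theorem schwartzSlice_schwartzTensor (φ : 𝓢(E, F)) (χ : 𝓢(D, ℝ)) (t : D) :
    schwartzSlice (schwartzTensor φ χ) t = χ t • φ :=
  rfl

end Tensor

section Integral

variable {E D F G : Type*} [NormedAddCommGroup E] [NormedSpace ℝ E]
  [NormedAddCommGroup D] [NormedSpace ℝ D] [FiniteDimensional ℝ D] [MeasurableSpace D]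
  [BorelSpace D] [NormedAddCommGroup F] [NormedSpace ℝ F] [NormedAddCommGroup G]
  [NormedSpace ℝ G] {μ : Measure D}

theorem integrable_inv_one_add_norm_pow [μ.IsAddHaarMeasure] {l : ℕ}
    (hl : Module.finrank ℝ D < l) : Integrable (fun t => ((1 + ‖t‖) ^ l)⁻¹) μ := by
  refine (integrable_one_add_norm (mod_cast hl : (Module.finrank ℝ D : ℝ) < l)).congr <|
    Eventually.of_forall fun t => ?_
  simp only [Real.rpow_neg (add_nonneg zero_le_one (norm_nonneg t)), Real.rpow_natCast]

theorem eq_of_forall_integral_schwartzSlice_eq [CompleteSpace G] [IsLocallyFiniteMeasure μ]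
    [μ.IsOpenPosMeasure] {f g : D → 𝓢(E, F) →L[ℝ] G} (hf : ∀ φ, Continuous fun t => f t φ)
    (hg : ∀ φ, Continuous fun t => g t φ)
    (h : ∀ ψ : 𝓢(E × D, F),
      ∫ t, f t (schwartzSlice ψ t) ∂μ = ∫ t, g t (schwartzSlice ψ t) ∂μ) : f = g := by
  ext t φ
  have hae : (fun t => f t φ) =ᵐ[μ] fun t => g t φ := by
    refine ae_eq_of_integral_contDiff_smul_eq (hf φ).locallyIntegrable (hg φ).locallyIntegrable
      fun χ hχ hχc => ?_
    have hintegral := h (schwartzTensor φ (hχc.toSchwartzMap hχ))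
    simp only [schwartzSlice_schwartzTensor, map_smul] at hintegral
    exact hintegral
  exact congrFun (((hf φ).ae_eq_iff_eq μ (hg φ)).1 hae) t

theorem continuous_bounded_distribution_family_integral_general [CompleteSpace F] [CompleteSpace G]
    [μ.IsAddHaarMeasure] {f : D → 𝓢(E, F) →L[ℝ] G} (hfc : ∀ φ, Continuous fun t => f t φ)
    (hfb : ∀ φ, ∃ C, ∀ t, ‖f t φ‖ ≤ C) :
    (∀ ψ : 𝓢(E × D, F), Continuous (fun t => f t (schwartzSlice ψ t)) ∧
      Integrable (fun t => f t (schwartzSlice ψ t)) μ) ∧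
    (∃ (c : ℝ) (M : ℕ), 0 ≤ c ∧ ∀ ψ : 𝓢(E × D, F), ‖∫ t, f t (schwartzSlice ψ t) ∂μ‖ ≤
      c * schwartzOrderSeminorm (M + (Module.finrank ℝ D + 1)) ψ) ∧
    (∀ g : D → 𝓢(E, F) →L[ℝ] G, (∀ φ, Continuous fun t => g t φ) →
      (∀ ψ : 𝓢(E × D, F),
        ∫ t, f t (schwartzSlice ψ t) ∂μ = ∫ t, g t (schwartzSlice ψ t) ∂μ) → f = g) := by
  obtain ⟨C, M, hC0, hC⟩ := exists_forall_norm_le_schwartzOrderSeminorm hfb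
  let l := Module.finrank ℝ D + 1
  have hbound := norm_apply_schwartzSlice_le hC0 hC l
  have hweight : Integrable (fun t => ((1 + ‖t‖) ^ l)⁻¹) μ :=
    integrable_inv_one_add_norm_pow (Nat.lt_succ_self _)
  refine ⟨fun ψ => ?_, ⟨C * 2 ^ (M + l) * ∫ t, ((1 + ‖t‖) ^ l)⁻¹ ∂μ, M, ?_, fun ψ => ?_⟩,
    fun g hgc h => eq_of_forall_integral_schwartzSlice_eq hfc hgc h⟩
  · have hcont := continuous_apply_of_pointwise_bounded hfc hfb (continuous_schwartzSlice ψ)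
    exact ⟨hcont, (hweight.const_mul _).mono' hcont.aestronglyMeasurable
      (Eventually.of_forall (hbound ψ))⟩
  · exact mul_nonneg (by positivity) (integral_nonneg fun t => by positivity)
  · refine (norm_integral_le_of_norm_le (hweight.const_mul _)
      (Eventually.of_forall (hbound ψ))).trans_eq ?_
    rw [integral_const_mul]
    ring

end Integral

/-- If `f : ℝ → 𝓢'(ℝⁿ)` is weak*-continuous and bounded, then for every
`ψ ∈ 𝓢(ℝⁿ×ℝ)` the function `t ↦ ⟨f(t), ψ(·,t)⟩` is continuous and integrable, the functional
`Λ_f : ψ ↦ ∫ ⟨f(t), ψ(·,t)⟩ dt` is a tempered distribution (it satisfies an estimate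
`|⟨Λ_f, ψ⟩| ≤ c·p_{M+2}(ψ)`), and `f ↦ Λ_f` is injective on such maps. -/
theorem continuous_bounded_distribution_family_integral (n : ℕ)
    (f g : ℝ → (SchwartzMap (Fin n → ℝ) ℝ →L[ℝ] ℝ))
    (hfc : ∀ φ : SchwartzMap (Fin n → ℝ) ℝ, Continuous fun t => f t φ)
    (hfb : ∀ φ : SchwartzMap (Fin n → ℝ) ℝ, ∃ C : ℝ, ∀ t : ℝ, |f t φ| ≤ C)
    (hgc : ∀ φ : SchwartzMap (Fin n → ℝ) ℝ, Continuous fun t => g t φ)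
    (hgb : ∀ φ : SchwartzMap (Fin n → ℝ) ℝ, ∃ C : ℝ, ∀ t : ℝ, |g t φ| ≤ C) :
    (∀ (ψ : SchwartzMap ((Fin n → ℝ) × ℝ) ℝ) (slice : ℝ → SchwartzMap (Fin n → ℝ) ℝ),
      (∀ (t : ℝ) (x : Fin n → ℝ), slice t x = ψ (x, t)) →
      Continuous (fun t => f t (slice t)) ∧ Integrable (fun t => f t (slice t))) ∧
    (∃ (c : ℝ) (M : ℕ), 0 ≤ c ∧
      ∀ (ψ : SchwartzMap ((Fin n → ℝ) × ℝ) ℝ) (slice : ℝ → SchwartzMap (Fin n → ℝ) ℝ),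
        (∀ (t : ℝ) (x : Fin n → ℝ), slice t x = ψ (x, t)) →
        |∫ t : ℝ, f t (slice t)| ≤ c * pM (M + 2) ψ) ∧
    ((∀ (ψ : SchwartzMap ((Fin n → ℝ) × ℝ) ℝ) (slice : ℝ → SchwartzMap (Fin n → ℝ) ℝ),
        (∀ (t : ℝ) (x : Fin n → ℝ), slice t x = ψ (x, t)) →
        (∫ t : ℝ, f t (slice t)) = ∫ t : ℝ, g t (slice t)) →
      f = g) := by
  simpa only [forall_apply_eq_iff_eq_schwartzSlice, forall_eq, pM_eq_schwartzOrderSeminorm,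
    Module.finrank_self, Nat.reduceAdd, Real.norm_eq_abs] using
    And.imp_right (And.imp_right fun h => h g hgc)
      (continuous_bounded_distribution_family_integral_general (μ := volume) hfc hfb)

end
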